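/- (Energy lower bound) Let n ≥ 1, m ≥ 2, and let u = (u_1,…,u_m) be a solution of system (S) on ℝⁿ with H̃(u(x)) ≤ 0 for all x ∈ ℝⁿ, and let α ∈ ℝ satisfy α ≥ 2sΦ'(s)/Φ(s) for every s > 0. Then, with C := ∫_{B_1} [ ∑_{i=1}^m Φ(|∇u_i|²) − 2H̃(u) ] dx ≥ 0 (a constant independent of R), one has for all R > 1: ∫_{B_R} [ ∑_{i=1}^m Φ(|∇u_i|²) − 2H̃(u) ] dx ≥ C R^{n−α}. -/

import Mathlib

open MeasureTheory Metric Finset Filter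
open scoped RealInnerProductSpace

noncomputable section

/-- Divergence of a vector field on Euclidean space. -/
def vdiv {n : ℕ} (F : EuclideanSpace ℝ (Fin n) → EuclideanSpace ℝ (Fin n))
    (x : EuclideanSpace ℝ (Fin n)) : ℝ :=
  ∑ i, fderiv ℝ F x (EuclideanSpace.single i 1) i

open scoped Topology

lemma aux_sum_single {n : ℕ} (L : EuclideanSpace ℝ (Fin n) →L[ℝ] ℝ)
    (w : EuclideanSpace ℝ (Fin n)) :
    ∑ i, L (EuclideanSpace.single i 1) * w i = L w := by
  conv_rhs => rw [← (EuclideanSpace.basisFun (Fin n) ℝ).sum_repr w]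
  simp [mul_comm]

lemma aux_continuous_vdiv {n : ℕ} (V : EuclideanSpace ℝ (Fin n) → EuclideanSpace ℝ (Fin n))
    (hV : ContDiff ℝ 1 V) : Continuous (vdiv V) := by
  unfold vdiv
  have h := hV.continuous_fderiv (by norm_num)
  refine continuous_finsetSum _ fun i _ => ?_
  exact (EuclideanSpace.proj (𝕜 := ℝ) i).continuous.comp (h.clm_apply continuous_const)

lemma aux_ibp {n : ℕ} (f : EuclideanSpace ℝ (Fin n) → ℝ) (hf : ContDiff ℝ 1 f)
    (hfc : HasCompactSupport f)
    (V : EuclideanSpace ℝ (Fin n) → EuclideanSpace ℝ (Fin n)) (hV : ContDiff ℝ 1 V) :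
    ∫ x, f x * vdiv V x = - ∫ x, fderiv ℝ f x (V x) := by
  have hVi : ∀ i, ContDiff ℝ 1 (fun x => V x i) := fun i =>
    (EuclideanSpace.proj (𝕜 := ℝ) i).contDiff.comp hV
  have hd : ∀ i x v, fderiv ℝ (fun x => V x i) x v = fderiv ℝ V x v i := by
    intro i x v
    have := ((EuclideanSpace.proj (𝕜 := ℝ) i).hasFDerivAt.comp x
      (hV.differentiable (by norm_num) x).hasFDerivAt).fderiv
    exact congrArg (fun L => L v) this
  have hf' := hf.continuous_fderiv (by norm_num)
  have hfc' := hfc.fderiv (𝕜 := ℝ)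
  have i1 : ∀ i, Integrable (fun x => fderiv ℝ f x (EuclideanSpace.single i 1) * V x i) := by
    intro i
    refine Continuous.integrable_of_hasCompactSupport
      ((hf'.clm_apply continuous_const).mul (hVi i).continuous) ?_
    refine HasCompactSupport.mul_right ?_
    exact hfc'.comp_left (g := fun L : EuclideanSpace ℝ (Fin n) →L[ℝ] ℝ => L (EuclideanSpace.single i 1)) (by simp)
  have i2 : ∀ i, Integrable (fun x => f x * fderiv ℝ (fun x => V x i) x (EuclideanSpace.single i 1)) := by
    intro i
    exact Continuous.integrable_of_hasCompactSupport
      (hf.continuous.mul (((hVi i).continuous_fderiv (by norm_num)).clm_apply continuous_const)) hfc.mul_right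
  have key : ∀ i, ∫ x, f x * fderiv ℝ (fun x => V x i) x (EuclideanSpace.single i 1)
      = - ∫ x, fderiv ℝ f x (EuclideanSpace.single i 1) * V x i := by
    intro i
    refine integral_mul_fderiv_eq_neg_fderiv_mul_of_integrable (i1 i) (i2 i)
      (Continuous.integrable_of_hasCompactSupport (hf.continuous.mul (hVi i).continuous) hfc.mul_right)
      ?_ ?_
    · intro x _; exact hf.differentiable (by norm_num) x
    · intro x _; exact (hVi i).differentiable (by norm_num) x
  calc ∫ x, f x * vdiv V x
      = ∫ x, ∑ i, f x * fderiv ℝ (fun x => V x i) x (EuclideanSpace.single i 1) := by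
        congr 1; ext x; simp [vdiv, hd, Finset.mul_sum]
    _ = ∑ i, ∫ x, f x * fderiv ℝ (fun x => V x i) x (EuclideanSpace.single i 1) :=
        integral_finsetSum _ fun i _ => i2 i
    _ = - ∑ i, ∫ x, fderiv ℝ f x (EuclideanSpace.single i 1) * V x i := by
        simp [key]
    _ = - ∫ x, ∑ i, fderiv ℝ f x (EuclideanSpace.single i 1) * V x i := by
        rw [integral_finsetSum _ fun i _ => i1 i]
    _ = _ := by simp_rw [aux_sum_single]

/-- derivative of the cutoff energy -/
lemma aux_deriv {n : ℕ} (φ : ℝ → ℝ) (hφ : ContDiff ℝ 1 φ) (hφ0 : ∀ s, 1 ≤ s → φ s = 0)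
    (e : EuclideanSpace ℝ (Fin n) → ℝ) (he : Continuous e) (t : ℝ) (ht : 0 < t) :
    HasDerivAt (fun t => ∫ x, φ (t * ‖x‖ ^ 2) * e x)
      (∫ x, deriv φ (t * ‖x‖ ^ 2) * ‖x‖ ^ 2 * e x) t := by
  have hφ' : Continuous (deriv φ) := hφ.continuous_deriv (by norm_num)
  have hz : ∀ s, 1 < s → deriv φ s = 0 := by
    intro s hs
    have : φ =ᶠ[𝓝 s] fun _ => 0 := by
      filter_upwards [lt_mem_nhds hs] with y hy using hφ0 y hy.le
    rw [this.deriv_eq]; simp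
  obtain ⟨C, hC⟩ := isCompact_Icc.exists_bound_of_continuousOn (s := Set.Icc (0:ℝ) 1) hφ'.continuousOn
  have hC0 : 0 ≤ C := (norm_nonneg _).trans (hC 0 (by simp))
  set K := closedBall (0 : EuclideanSpace ℝ (Fin n)) (Real.sqrt (2 / t)) with hK
  have hKc : IsCompact K := isCompact_closedBall _ _
  have hKmem : ∀ x : EuclideanSpace ℝ (Fin n), ∀ r, t / 2 < r → r * ‖x‖ ^ 2 ≤ 1 → x ∈ K := by
    intro x r hr h
    rw [hK, mem_closedBall_zero_iff]
    apply Real.le_sqrt_of_sq_le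
    rw [le_div_iff₀ ht]
    nlinarith [sq_nonneg ‖x‖]
  have cont1 : ∀ r : ℝ, Continuous fun x : EuclideanSpace ℝ (Fin n) => φ (r * ‖x‖ ^ 2) * e x := by
    intro r
    exact (hφ.continuous.comp (by fun_prop)).mul he
  refine (hasDerivAt_integral_of_dominated_loc_of_deriv_le (μ := volume)
    (F := fun t x => φ (t * ‖x‖ ^ 2) * e x)
    (F' := fun t x => deriv φ (t * ‖x‖ ^ 2) * ‖x‖ ^ 2 * e x)
    (bound := K.indicator fun x => C * ‖x‖ ^ 2 * |e x|)
    (Ioi_mem_nhds (show t / 2 < t by linarith)) ?_ ?_ ?_ ?_ ?_ ?_).2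
  · exact Eventually.of_forall fun r => (cont1 r).aestronglyMeasurable
  · refine (cont1 t).integrable_of_hasCompactSupport ?_
    refine HasCompactSupport.intro hKc fun x hx => ?_
    rw [hφ0, zero_mul]
    by_contra h
    exact hx (hKmem x t (by linarith) (not_le.1 h).le)
  · exact (((hφ'.comp (by fun_prop)).mul (by fun_prop)).mul he).aestronglyMeasurable
  · refine Eventually.of_forall fun x r hr => ?_
    by_cases h : r * ‖x‖ ^ 2 ≤ 1
    · rw [Set.indicator_of_mem (hKmem x r hr h), norm_mul, norm_mul]
      have h0 : 0 ≤ r * ‖x‖ ^ 2 := mul_nonneg ((half_pos ht).trans hr).le (sq_nonneg _)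
      have := hC _ ⟨h0, h⟩
      rw [Real.norm_of_nonneg (sq_nonneg ‖x‖), Real.norm_eq_abs (e x)]
      gcongr
    · rw [hz _ (not_le.1 h)]
      simp only [zero_mul, norm_zero]
      exact Set.indicator_nonneg (fun x _ => by positivity) _
  · refine IntegrableOn.integrable_indicator ?_ measurableSet_closedBall
    exact ContinuousOn.integrableOn_compact hKc (by fun_prop)
  · refine Eventually.of_forall fun x r hr => ?_
    have h1 : HasDerivAt (fun r : ℝ => r * ‖x‖ ^ 2) (‖x‖ ^ 2) r := by
      simpa using (hasDerivAt_id r).mul_const (‖x‖ ^ 2)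
    have h2 := ((hφ.differentiable (by norm_num) (r * ‖x‖ ^ 2)).hasDerivAt.comp r h1).mul_const (e x)
    exact h2

lemma aux_ineq {n : ℕ} (φ : ℝ → ℝ) (hφ : ContDiff ℝ 1 φ) (hφ0 : ∀ s, 1 ≤ s → φ s = 0)
    (hφn : ∀ s, 0 ≤ φ s) (hφa : Antitone φ)
    (e : EuclideanSpace ℝ (Fin n) → ℝ) (he : Continuous e)
    (V : EuclideanSpace ℝ (Fin n) → EuclideanSpace ℝ (Fin n)) (hV : ContDiff ℝ 1 V)
    (β : ℝ) (hdiv : ∀ x, vdiv V x ≤ β * e x) (hin : ∀ x, - (‖x‖ ^ 2 * e x) ≤ ⟪x, V x⟫)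
    (t : ℝ) (ht : 0 < t) :
    2 * t * (∫ x, deriv φ (t * ‖x‖ ^ 2) * ‖x‖ ^ 2 * e x) ≤ β * ∫ x, φ (t * ‖x‖ ^ 2) * e x := by
  have hφ' : Continuous (deriv φ) := hφ.continuous_deriv (by norm_num)
  have hz : ∀ s, 1 < s → deriv φ s = 0 := by
    intro s hs
    have : φ =ᶠ[𝓝 s] fun _ => 0 := by
      filter_upwards [lt_mem_nhds hs] with y hy using hφ0 y hy.le
    rw [this.deriv_eq]; simp
  set K := closedBall (0 : EuclideanSpace ℝ (Fin n)) (Real.sqrt (1 / t)) with hK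
  have hKc : IsCompact K := isCompact_closedBall _ _
  have hKmem : ∀ x : EuclideanSpace ℝ (Fin n), x ∉ K → 1 < t * ‖x‖ ^ 2 := by
    intro x hx
    by_contra h
    apply hx
    rw [hK, mem_closedBall_zero_iff]
    apply Real.le_sqrt_of_sq_le
    rw [le_div_iff₀ ht]
    linarith
  set f : EuclideanSpace ℝ (Fin n) → ℝ := fun x => φ (t * ‖x‖ ^ 2) with hf
  have hfC : ContDiff ℝ 1 f := hφ.comp (contDiff_const.mul (contDiff_norm_sq ℝ))
  have hfs : HasCompactSupport f := HasCompactSupport.intro hKc fun x hx => hφ0 _ (hKmem x hx).le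
  have hfd : ∀ x v, fderiv ℝ f x v = deriv φ (t * ‖x‖ ^ 2) * (2 * t * ⟪x, v⟫) := by
    intro x v
    have h1 : HasFDerivAt (fun x : EuclideanSpace ℝ (Fin n) => t * ‖x‖ ^ 2) (t • (2 • innerSL ℝ x)) x :=
      (hasStrictFDerivAt_norm_sq x).hasFDerivAt.const_mul t
    have h2 := (hφ.differentiable (by norm_num) (t * ‖x‖ ^ 2)).hasDerivAt.comp_hasFDerivAt x h1
    have h3 : fderiv ℝ f x = _ := h2.fderiv
    rw [h3]
    simp
    left
    ring
  have hibp := aux_ibp f hfC hfs V hV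
  simp_rw [hfd] at hibp
  have c1 : Continuous fun x : EuclideanSpace ℝ (Fin n) => deriv φ (t * ‖x‖ ^ 2) :=
    hφ'.comp (by fun_prop)
  have s1 : HasCompactSupport fun x : EuclideanSpace ℝ (Fin n) => deriv φ (t * ‖x‖ ^ 2) :=
    HasCompactSupport.intro hKc fun x hx => hz _ (hKmem x hx)
  have m1 : ∫ x, f x * vdiv V x ≤ ∫ x, β * (f x * e x) := by
    refine integral_mono ?_ ?_ ?_
    · exact (hfC.continuous.mul (aux_continuous_vdiv V hV)).integrable_of_hasCompactSupport hfs.mul_right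
    · exact ((hfC.continuous.mul he).integrable_of_hasCompactSupport hfs.mul_right).const_mul β
    · intro x
      have := mul_le_mul_of_nonneg_left (hdiv x) (hφn (t * ‖x‖ ^ 2))
      simp only [hf]; linarith
  have m2 : ∫ x, deriv φ (t * ‖x‖ ^ 2) * (2 * t * ⟪x, V x⟫) ≤
      ∫ x, (-(2 * t)) * (deriv φ (t * ‖x‖ ^ 2) * ‖x‖ ^ 2 * e x) := by
    have := hV.continuous
    refine integral_mono ?_ ?_ ?_
    · exact (c1.mul (by fun_prop)).integrable_of_hasCompactSupport s1.mul_right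
    · exact (((c1.mul (by fun_prop)).mul he).integrable_of_hasCompactSupport
        s1.mul_right.mul_right).const_mul _
    · intro x
      have h0 : deriv φ (t * ‖x‖ ^ 2) ≤ 0 := hφa.deriv_nonpos
      have := mul_le_mul_of_nonpos_left (hin x) (mul_nonpos_of_nonneg_of_nonpos (by linarith : 0 ≤ 2 * t) h0)
      simp only; linarith
  rw [integral_const_mul] at m1 m2
  simp only [hf] at m1 hibp
  linarith

lemma aux_mono {n : ℕ} (φ : ℝ → ℝ) (hφ : ContDiff ℝ 1 φ) (hφ0 : ∀ s, 1 ≤ s → φ s = 0)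
    (hφn : ∀ s, 0 ≤ φ s) (hφa : Antitone φ)
    (e : EuclideanSpace ℝ (Fin n) → ℝ) (he : Continuous e)
    (V : EuclideanSpace ℝ (Fin n) → EuclideanSpace ℝ (Fin n)) (hV : ContDiff ℝ 1 V)
    (β : ℝ) (hdiv : ∀ x, vdiv V x ≤ β * e x) (hin : ∀ x, - (‖x‖ ^ 2 * e x) ≤ ⟪x, V x⟫)
    (R : ℝ) (hR : 1 < R) :
    (∫ x, φ (1 * ‖x‖ ^ 2) * e x) * R ^ (-β) ≤ ∫ x, φ ((R ^ 2)⁻¹ * ‖x‖ ^ 2) * e x := by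
  have hR0 : 0 < R := by linarith
  set G : ℝ → ℝ := fun t => ∫ x, φ (t * ‖x‖ ^ 2) * e x with hG
  set G' : ℝ → ℝ := fun t => ∫ x, deriv φ (t * ‖x‖ ^ 2) * ‖x‖ ^ 2 * e x with hG'
  have hd : ∀ t, 0 < t → HasDerivAt (fun t => G t * t ^ (-β / 2))
      (G' t * t ^ (-β / 2) + G t * ((-β / 2) * t ^ (-β / 2 - 1))) t := by
    intro t ht
    exact (aux_deriv φ hφ hφ0 e he t ht).mul (Real.hasDerivAt_rpow_const (Or.inl ht.ne'))
  have anti : AntitoneOn (fun t => G t * t ^ (-β / 2)) (Set.Ioi 0) := by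
    refine antitoneOn_of_deriv_nonpos (convex_Ioi 0)
      (fun t ht => (hd t ht).continuousAt.continuousWithinAt) ?_ ?_
    · rw [interior_Ioi]
      exact fun t ht => (hd t ht).differentiableAt.differentiableWithinAt
    · rw [interior_Ioi]
      intro t ht
      have ht : 0 < t := ht
      rw [(hd t ht).deriv]
      have h1 : 2 * t * G' t ≤ β * G t := aux_ineq φ hφ hφ0 hφn hφa e he V hV β hdiv hin t ht
      have h2 : t ^ (-β / 2) = t ^ (-β / 2 - 1) * t := by
        rw [Real.rpow_sub_one ht.ne']; field_simp
      rw [h2]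
      have := Real.rpow_pos_of_pos ht (-β / 2 - 1)
      nlinarith
  have h := anti (show (R ^ 2)⁻¹ ∈ Set.Ioi (0:ℝ) by simp; positivity) (show (1:ℝ) ∈ Set.Ioi (0:ℝ) by simp)
    (inv_le_one_of_one_le₀ (by nlinarith))
  simp only [Real.one_rpow, mul_one] at h
  have h3 : ((R ^ 2)⁻¹ : ℝ) ^ (-β / 2) = R ^ β := by
    rw [Real.inv_rpow (by positivity), ← Real.rpow_natCast, ← Real.rpow_mul hR0.le,
      ← Real.rpow_neg hR0.le]
    congr 1; push_cast; ring
  rw [h3] at h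
  have h4 := Real.rpow_pos_of_pos hR0 β
  rw [Real.rpow_neg hR0.le, ← div_eq_mul_inv, div_le_iff₀ h4]
  exact h

lemma aux_main {n : ℕ}
    (e : EuclideanSpace ℝ (Fin n) → ℝ) (he : Continuous e) (he0 : ∀ x, 0 ≤ e x)
    (V : EuclideanSpace ℝ (Fin n) → EuclideanSpace ℝ (Fin n)) (hV : ContDiff ℝ 1 V)
    (β : ℝ) (hdiv : ∀ x, vdiv V x ≤ β * e x) (hin : ∀ x, - (‖x‖ ^ 2 * e x) ≤ ⟪x, V x⟫)
    (R : ℝ) (hR : 1 < R) :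
    (∫ x in ball 0 1, e x) * R ^ (-β) ≤ ∫ x in ball 0 R, e x := by
  have hint : ∀ r, IntegrableOn e (ball 0 r) := fun r =>
    (he.continuousOn.integrableOn_compact (isCompact_closedBall 0 r)).mono_set ball_subset_closedBall
  set φ : ℕ → ℝ → ℝ := fun k s => Real.smoothTransition (k * (1 - s)) with hφ
  have hC : ∀ k, ContDiff ℝ 1 (φ k) := fun k =>
    (Real.smoothTransition.contDiff (n := 1)).comp (by fun_prop)
  have h0 : ∀ k s, 1 ≤ s → φ k s = 0 := fun k s hs =>
    Real.smoothTransition.zero_of_nonpos (mul_nonpos_of_nonneg_of_nonpos (by positivity) (by linarith))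
  have hn : ∀ k s, 0 ≤ φ k s := fun k s => Real.smoothTransition.nonneg _
  have h1 : ∀ k s, φ k s ≤ 1 := fun k s => Real.smoothTransition.le_one _
  have ha : ∀ k, Antitone (φ k) := fun k a b hab =>
    Real.smoothTransition.monotone (mul_le_mul_of_nonneg_left (by linarith) (by positivity))
  have hle : ∀ k r, 0 < r → ∀ x : EuclideanSpace ℝ (Fin n),
      φ k ((r ^ 2)⁻¹ * ‖x‖ ^ 2) * e x ≤ (ball 0 r).indicator e x := by
    intro k r hr x
    by_cases hx : x ∈ ball 0 r
    · rw [Set.indicator_of_mem hx]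
      exact mul_le_of_le_one_left (he0 x) (h1 _ _)
    · rw [Set.indicator_of_notMem hx, h0, zero_mul]
      rw [mem_ball_zero_iff, not_lt] at hx
      rw [inv_mul_eq_div, one_le_div (by positivity)]
      gcongr
  have hci : ∀ k r, Continuous fun x : EuclideanSpace ℝ (Fin n) => φ k (r * ‖x‖ ^ 2) * e x :=
    fun k r => ((hC k).continuous.comp (by fun_prop)).mul he
  have hub : ∀ k, (∫ x, φ k (1 * ‖x‖ ^ 2) * e x) * R ^ (-β) ≤ ∫ x in ball 0 R, e x := by
    intro k
    refine (aux_mono (φ k) (hC k) (h0 k) (hn k) (ha k) e he V hV β hdiv hin R hR).trans ?_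
    rw [← integral_indicator measurableSet_ball]
    refine integral_mono_of_nonneg (Eventually.of_forall fun x => mul_nonneg (hn _ _) (he0 x))
      ((hint R).integrable_indicator measurableSet_ball)
      (Eventually.of_forall fun x => hle k R (by linarith) x)
  have hlim : Tendsto (fun k => ∫ x, φ k (1 * ‖x‖ ^ 2) * e x) atTop (𝓝 (∫ x in ball 0 1, e x)) := by
    rw [← integral_indicator measurableSet_ball]
    refine tendsto_integral_of_dominated_convergence ((ball 0 1).indicator e)
      (fun k => (hci k 1).aestronglyMeasurable) ((hint 1).integrable_indicator measurableSet_ball) ?_ ?_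
    · intro k
      refine Eventually.of_forall fun x => ?_
      rw [Real.norm_of_nonneg (mul_nonneg (hn _ _) (he0 x))]
      simpa using hle k 1 one_pos x
    · refine Eventually.of_forall fun x => ?_
      by_cases hx : x ∈ ball 0 1
      · rw [Set.indicator_of_mem hx]
        rw [mem_ball_zero_iff] at hx
        have hx2 : 0 < 1 - ‖x‖ ^ 2 := by nlinarith [norm_nonneg x]
        obtain ⟨N, hN⟩ := exists_nat_ge (1 / (1 - ‖x‖ ^ 2))
        refine tendsto_const_nhds.congr' ?_
        filter_upwards [eventually_ge_atTop N] with k hk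
        simp only [hφ]
        rw [Real.smoothTransition.one_of_one_le, one_mul]
        rw [div_le_iff₀ hx2] at hN
        have : (N:ℝ) ≤ k := by exact_mod_cast hk
        nlinarith
      · rw [Set.indicator_of_notMem hx]
        rw [mem_ball_zero_iff, not_lt] at hx
        refine tendsto_const_nhds.congr fun k => ?_
        rw [h0, zero_mul]
        nlinarith
  exact le_of_tendsto' (hlim.mul_const _) hub

section vdivlemmas
variable {n : ℕ}

lemma vdiv_sub' (F G : EuclideanSpace ℝ (Fin n) → EuclideanSpace ℝ (Fin n))
    (x : EuclideanSpace ℝ (Fin n)) (hF : DifferentiableAt ℝ F x) (hG : DifferentiableAt ℝ G x) :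
    vdiv (fun y => F y - G y) x = vdiv F x - vdiv G x := by
  unfold vdiv
  rw [fderiv_fun_sub hF hG]
  simp

lemma vdiv_sum' {ι : Type*} (s : Finset ι)
    (F : ι → EuclideanSpace ℝ (Fin n) → EuclideanSpace ℝ (Fin n))
    (x : EuclideanSpace ℝ (Fin n)) (hF : ∀ i ∈ s, DifferentiableAt ℝ (F i) x) :
    vdiv (fun y => ∑ i ∈ s, F i y) x = ∑ i ∈ s, vdiv (F i) x := by
  unfold vdiv
  rw [fderiv_fun_sum hF, Finset.sum_comm]
  simp

lemma vdiv_smul' (f : EuclideanSpace ℝ (Fin n) → ℝ)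
    (F : EuclideanSpace ℝ (Fin n) → EuclideanSpace ℝ (Fin n))
    (x : EuclideanSpace ℝ (Fin n)) (hf : DifferentiableAt ℝ f x) (hF : DifferentiableAt ℝ F x) :
    vdiv (fun y => f y • F y) x = f x * vdiv F x + fderiv ℝ f x (F x) := by
  unfold vdiv
  rw [fderiv_fun_smul hf hF, ← aux_sum_single (fderiv ℝ f x) (F x), Finset.mul_sum,
    ← Finset.sum_add_distrib]
  simp

lemma vdiv_id' (x : EuclideanSpace ℝ (Fin n)) :
    vdiv (fun y : EuclideanSpace ℝ (Fin n) => y) x = n := by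
  unfold vdiv
  simp

end vdivlemmas

lemma aux_gradient_contDiff {n : ℕ} (f : EuclideanSpace ℝ (Fin n) → ℝ) (hf : ContDiff ℝ 2 f) :
    ContDiff ℝ 1 (gradient f) := by
  have h : ContDiff ℝ 1 (fderiv ℝ f) := hf.fderiv_right (by norm_num)
  exact (InnerProductSpace.toDual ℝ (EuclideanSpace ℝ (Fin n))).symm.contDiff.comp h

lemma aux_gradient_symm {n : ℕ} (f : EuclideanSpace ℝ (Fin n) → ℝ) (hf : ContDiff ℝ 2 f)
    (x v w : EuclideanSpace ℝ (Fin n)) :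
    ⟪fderiv ℝ (gradient f) x v, w⟫ = ⟪fderiv ℝ (gradient f) x w, v⟫ := by
  have hg := (aux_gradient_contDiff f hf).differentiable (by norm_num)
  have h : ∀ v w, fderiv ℝ (fderiv ℝ f) x v w = ⟪fderiv ℝ (gradient f) x v, w⟫ := by
    intro v w
    have h1 : fderiv ℝ f = fun y => innerSL ℝ (gradient f y) := by
      ext y z
      simp [inner_gradient_left]
    rw [h1]
    have h2 : HasFDerivAt (fun y => innerSL ℝ (gradient f y)) _ x :=
      (innerSL ℝ (E := EuclideanSpace ℝ (Fin n))).hasFDerivAt.comp x (hg x).hasFDerivAt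
    rw [h2.fderiv]
    rfl
  rw [← h, ← h]
  exact hf.contDiffAt.isSymmSndFDerivAt (by simp) v w

theorem energy_lower_bound
    (n m : ℕ) (hn : 1 ≤ n) (hm : 2 ≤ m)
    (Φ : ℝ → ℝ) (hΦ : ContDiff ℝ 2 Φ) (hΦ0 : Φ 0 = 0)
    (hΦpos : ∀ s : ℝ, 0 < s → 0 < Φ s)
    (hΦ'pos : ∀ s : ℝ, 0 < s → 0 < deriv Φ s)
    (hΦell : ∀ s : ℝ, 0 < s → 0 < deriv Φ s + 2 * s * deriv (deriv Φ) s)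
    (H : Fin m → (Fin m → ℝ) → ℝ) (hH : ∀ i, ContDiff ℝ 1 (H i))
    (Ht : (Fin m → ℝ) → ℝ) (hHt : ContDiff ℝ 2 Ht)
    (hHtgrad : ∀ i y, fderiv ℝ Ht y (Pi.single i 1) = H i y)
    (u : Fin m → EuclideanSpace ℝ (Fin n) → ℝ)
    (hu : ∀ i, ContDiff ℝ 2 (u i))
    (hsol : ∀ i x, -vdiv (fun y => deriv Φ (‖gradient (u i) y‖ ^ 2) • gradient (u i) y) x
        = H i (fun j => u j x))
    (hHneg : ∀ x : EuclideanSpace ℝ (Fin n), Ht (fun j => u j x) ≤ 0)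
    (α : ℝ) (hα : ∀ s : ℝ, 0 < s → 2 * s * deriv Φ s / Φ s ≤ α) :
    0 ≤ (∫ x in ball (0 : EuclideanSpace ℝ (Fin n)) 1,
          ((∑ i, Φ (‖gradient (u i) x‖ ^ 2)) - 2 * Ht (fun j => u j x)))
    ∧ ∀ R : ℝ, 1 < R →
      (∫ x in ball (0 : EuclideanSpace ℝ (Fin n)) 1,
          ((∑ i, Φ (‖gradient (u i) x‖ ^ 2)) - 2 * Ht (fun j => u j x)))
        * R ^ ((n : ℝ) - α)
      ≤ ∫ x in ball (0 : EuclideanSpace ℝ (Fin n)) R,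
          ((∑ i, Φ (‖gradient (u i) x‖ ^ 2)) - 2 * Ht (fun j => u j x)) := by
  have hΦnn : ∀ s, 0 ≤ s → 0 ≤ Φ s := by
    intro s hs
    rcases hs.eq_or_lt with h | h
    · rw [← h, hΦ0]
    · exact (hΦpos s h).le
  have hαpos : 0 ≤ α :=
    (div_nonneg (mul_nonneg (by norm_num) (hΦ'pos 1 one_pos).le) (hΦpos 1 one_pos).le).trans
      (hα 1 one_pos)
  have hαs : ∀ s, 0 ≤ s → 2 * s * deriv Φ s ≤ α * Φ s := by
    intro s hs
    rcases hs.eq_or_lt with h | h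
    · rw [← h, hΦ0]; simp
    · exact (div_le_iff₀ (hΦpos s h)).1 (hα s h)
  have hG1 : ∀ i, ContDiff ℝ 1 (gradient (u i)) := fun i => aux_gradient_contDiff _ (hu i)
  have hGd : ∀ i, Differentiable ℝ (gradient (u i)) := fun i => (hG1 i).differentiable (by norm_num)
  have hΦ1 : ContDiff ℝ 1 (deriv Φ) := by
    have := (contDiff_succ_iff_deriv (n := 1) (f := Φ)).1 (by simpa [one_add_one_eq_two] using hΦ)
    exact this.2.2
  have hW1 : ∀ i, ContDiff ℝ 1 (fun y => deriv Φ (‖gradient (u i) y‖ ^ 2) • gradient (u i) y) :=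
    fun i => (hΦ1.comp ((hG1 i).norm_sq ℝ)).smul (hG1 i)
  have hu1 : ∀ i, ContDiff ℝ 1 (u i) := fun i => (hu i).of_le (by norm_num)
  have hU1 : ContDiff ℝ 1 (fun x j => u j x) := contDiff_pi.2 hu1
  set e : EuclideanSpace ℝ (Fin n) → ℝ :=
    fun x => (∑ i, Φ (‖gradient (u i) x‖ ^ 2)) - 2 * Ht (fun j => u j x) with he
  have heC : ContDiff ℝ 1 e := by
    refine ContDiff.sub (ContDiff.sum fun i _ => ?_) (contDiff_const.mul ?_)
    · exact (hΦ.of_le (by norm_num)).comp ((hG1 i).norm_sq ℝ)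
    · exact (hHt.of_le (by norm_num)).comp hU1
  have he0 : ∀ x, 0 ≤ e x := by
    intro x
    have : 0 ≤ ∑ i, Φ (‖gradient (u i) x‖ ^ 2) :=
      Finset.sum_nonneg fun i _ => hΦnn _ (sq_nonneg _)
    have := hHneg x
    simp only [he]; linarith
  set V : EuclideanSpace ℝ (Fin n) → EuclideanSpace ℝ (Fin n) := fun x =>
    (∑ i, (2 * ⟪gradient (u i) x, x⟫) • (deriv Φ (‖gradient (u i) x‖ ^ 2) • gradient (u i) x))
      - e x • x with hVdef
  have ha1 : ∀ i, ContDiff ℝ 1 (fun x => 2 * ⟪gradient (u i) x, x⟫) := fun i =>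
    contDiff_const.mul ((hG1 i).inner ℝ contDiff_id)
  have hV : ContDiff ℝ 1 V :=
    ContDiff.sub (ContDiff.sum fun i _ => (ha1 i).smul (hW1 i)) (heC.smul contDiff_id)
  -- derivative of the energy density
  have hde : ∀ x v, fderiv ℝ e x v =
      ∑ i, (deriv Φ (‖gradient (u i) x‖ ^ 2) * (2 * ⟪gradient (u i) x, fderiv ℝ (gradient (u i)) x v⟫)
        - 2 * (H i (fun j => u j x) * ⟪gradient (u i) x, v⟫)) := by
    intro x v
    have h1 : ∀ i, HasFDerivAt (fun x => Φ (‖gradient (u i) x‖ ^ 2))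
        (deriv Φ (‖gradient (u i) x‖ ^ 2) • (2 • (innerSL ℝ (gradient (u i) x)).comp
          (fderiv ℝ (gradient (u i)) x))) x := by
      intro i
      exact (hΦ.differentiable (by norm_num) _).hasDerivAt.comp_hasFDerivAt x
        ((hGd i x).hasFDerivAt.norm_sq)
    have h2 : HasFDerivAt (fun x => Ht (fun j => u j x))
        ((fderiv ℝ Ht (fun j => u j x)).comp (ContinuousLinearMap.pi fun j => fderiv ℝ (u j) x)) x := by
      refine HasFDerivAt.comp (g := Ht) (f := fun x j => u j x) x (hHt.differentiable (by norm_num) _).hasFDerivAt ?_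
      exact hasFDerivAt_pi.2 fun j => ((hu1 j).differentiable (by norm_num) x).hasFDerivAt
    have h3 : HasFDerivAt e _ x :=
      (HasFDerivAt.fun_sum (u := Finset.univ) fun i _ => h1 i).sub (h2.const_mul 2)
    rw [h3.fderiv]
    have h4 : ∀ w : Fin m → ℝ, fderiv ℝ Ht (fun j => u j x) w
        = ∑ i, H i (fun j => u j x) * w i := by
      intro w
      conv_lhs => rw [← Finset.univ_sum_single w]
      rw [map_sum]
      refine Finset.sum_congr rfl fun i _ => ?_
      rw [← hHtgrad, show Pi.single i (w i) = w i • (Pi.single i 1 : Fin m → ℝ) by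
        rw [← Pi.single_smul]; simp, map_smul, smul_eq_mul, mul_comm]
    simp [h4, Finset.sum_sub_distrib, Finset.mul_sum, inner_gradient_left]
  have hdivV : ∀ x, vdiv V x =
      (∑ i, 2 * ‖gradient (u i) x‖ ^ 2 * deriv Φ (‖gradient (u i) x‖ ^ 2)) - n * e x := by
    intro x
    have hW : ∀ i, DifferentiableAt ℝ
        (fun y => deriv Φ (‖gradient (u i) y‖ ^ 2) • gradient (u i) y) x :=
      fun i => (hW1 i).differentiable (by norm_num) x
    have ha : ∀ i, DifferentiableAt ℝ (fun x => 2 * ⟪gradient (u i) x, x⟫) x :=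
      fun i => (ha1 i).differentiable (by norm_num) x
    have hed : DifferentiableAt ℝ e x := heC.differentiable (by norm_num) x
    have hid : DifferentiableAt ℝ (fun y : EuclideanSpace ℝ (Fin n) => y) x := differentiableAt_id
    have hda : ∀ i v, fderiv ℝ (fun x => 2 * ⟪gradient (u i) x, x⟫) x v =
        2 * (⟪gradient (u i) x, v⟫ + ⟪fderiv ℝ (gradient (u i)) x v, x⟫) := by
      intro i v
      rw [fderiv_const_mul ((hGd i x).inner ℝ hid)]
      rw [_root_.smul_apply, fderiv_inner_apply ℝ (hGd i x) hid]
      simp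
    rw [hVdef, vdiv_sub' _ _ _ (DifferentiableAt.fun_sum fun i _ => (ha i).fun_smul (hW i))
      (hed.fun_smul hid), vdiv_sum' _ _ _ (fun i _ => (ha i).fun_smul (hW i)),
      vdiv_smul' _ _ _ hed hid, vdiv_id', hde]
    have : ∀ i, vdiv (fun y => (2 * ⟪gradient (u i) y, y⟫) •
        (deriv Φ (‖gradient (u i) y‖ ^ 2) • gradient (u i) y)) x =
        2 * ‖gradient (u i) x‖ ^ 2 * deriv Φ (‖gradient (u i) x‖ ^ 2) +
        (deriv Φ (‖gradient (u i) x‖ ^ 2) * (2 * ⟪gradient (u i) x, fderiv ℝ (gradient (u i)) x x⟫)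
        - 2 * (H i (fun j => u j x) * ⟪gradient (u i) x, x⟫)) := by
      intro i
      rw [vdiv_smul' _ _ _ (ha i) (hW i), hda, ← hsol i x, map_smul, inner_smul_right,
        inner_smul_left, aux_gradient_symm _ (hu i), real_inner_self_eq_norm_sq,
        real_inner_comm (gradient (u i) x) (fderiv ℝ (gradient (u i)) x x)]
      simp
      ring
    simp_rw [this]
    rw [Finset.sum_add_distrib]
    ring
  have hdiv : ∀ x, vdiv V x ≤ (α - n) * e x := by
    intro x
    rw [hdivV]
    have h1 : ∑ i, 2 * ‖gradient (u i) x‖ ^ 2 * deriv Φ (‖gradient (u i) x‖ ^ 2) ≤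
        ∑ i, α * Φ (‖gradient (u i) x‖ ^ 2) :=
      Finset.sum_le_sum fun i _ => hαs _ (sq_nonneg _)
    rw [← Finset.mul_sum] at h1
    have h2 : α * ∑ i, Φ (‖gradient (u i) x‖ ^ 2) ≤ α * e x := by
      refine mul_le_mul_of_nonneg_left ?_ hαpos
      have := hHneg x
      simp only [he]; linarith
    linarith
  have hin : ∀ x, - (‖x‖ ^ 2 * e x) ≤ ⟪x, V x⟫ := by
    intro x
    have h1 : ⟪x, V x⟫ = (∑ i, 2 * (deriv Φ (‖gradient (u i) x‖ ^ 2) * ⟪gradient (u i) x, x⟫ ^ 2))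
        - ‖x‖ ^ 2 * e x := by
      simp only [hVdef, inner_sub_right, inner_sum, inner_smul_right, real_inner_self_eq_norm_sq]
      congr 1
      · refine Finset.sum_congr rfl fun i _ => ?_
        rw [real_inner_comm x (gradient (u i) x)]
        ring
      · ring
    have h2 : 0 ≤ ∑ i, 2 * (deriv Φ (‖gradient (u i) x‖ ^ 2) * ⟪gradient (u i) x, x⟫ ^ 2) := by
      refine Finset.sum_nonneg fun i _ => ?_
      by_cases h : gradient (u i) x = 0
      · simp [h]
      · have := hΦ'pos (‖gradient (u i) x‖ ^ 2) (by positivity)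
        positivity
    linarith
  refine ⟨setIntegral_nonneg measurableSet_ball fun x _ => he0 x, fun R hR => ?_⟩
  have := aux_main e heC.continuous he0 V hV (α - n) hdiv hin R hR
  rwa [neg_sub] at this
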